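/- Let A be a proper nonempty subset of {0,1}^n. Let Y be the first exit time from A of a simple random walk on the hypercube started at a uniformly random point of A. Then E[Y] ≤ n / log₂(2^n / |A|). -/

import Mathlib

/-!
The walk killed on leaving `A` is governed by the graph Laplacian `Δ`. The expected time
`u x` spent in `A` before a fixed horizon, starting at `x`, satisfies `Δ u ≤ n` on `A`, so its
Dirichlet energy `⟨u, Δ u⟩` is at most `n ∑ u`. Against this stands a Faber-Krahn inequality:
among nonnegative functions supported on `A` with prescribed sum `s`, the energy is at least
`s² (n - log₂ |A|) / |A|`, the energy of a constant function on a subcube. Comparing the two gives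
`∑ u / |A| ≤ n / (n - log₂ |A|)`, and the horizon is then sent to infinity.

The Faber-Krahn inequality goes by induction on `n`, cutting the cube into two facets. The edges
between the facets contribute `∑ (f₀ - f₁)²`, which Cauchy-Schwarz bounds below by the squared
difference of the two sums over the larger of the two supports. What remains is an inequality in
the sizes `b ≤ a` of the supports and the sums `s`, `t`; with `x = b / a`, it needs of the logarithm
only that `x ≤ log₂ (1 + x) ≤ 1` for `x ∈ [0, 1]` and that `2 + log₂ x ≤ 2 log₂ (1 + x)`.
-/

open Finset

/-- Number of walks of length `k` inside `A` in the hypercube graph: sequences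
`p : Fin (k+1) → {0,1}^n` with all points in `A` and consecutive points adjacent. -/
def walkCount (n : ℕ) (A : Finset (Fin n → Bool)) (k : ℕ) : ℕ :=
  ((univ : Finset (Fin (k + 1) → (Fin n → Bool))).filter
    (fun p => (∀ j, p j ∈ A) ∧
      ∀ j : Fin k, (univ.filter fun i => p j.castSucc i ≠ p j.succ i).card = 1)).card

open Matrix

section Graph

variable {V : Type*} [Fintype V] (G : SimpleGraph V) [DecidableRel G.Adj]

/-- The Dirichlet energy of `f`, in which every edge counts once: the double sum runs over ordered
pairs, hence the factor `1 / 2`. -/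
noncomputable def dirichletForm (f : V → ℝ) : ℝ :=
  (∑ x, ∑ y, if G.Adj x y then (f x - f y) ^ 2 else 0) / 2

lemma dirichletForm_nonneg (f : V → ℝ) : 0 ≤ dirichletForm G f := by
  unfold dirichletForm; positivity

variable [DecidableEq V]

lemma dirichletForm_eq_dotProduct (f : V → ℝ) :
    dirichletForm G f = f ⬝ᵥ G.lapMatrix ℝ *ᵥ f := by
  rw [← toLinearMap₂'_apply', G.lapMatrix_toLinearMap₂' ℝ, dirichletForm]

/-- Walks of length `k` all of whose `k + 1` vertices lie in `A`, as vertex sequences. -/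
def walksIn (A : Finset V) (k : ℕ) : Finset (Fin (k + 1) → V) :=
  {p | (∀ j, p j ∈ A) ∧ ∀ j : Fin k, G.Adj (p j.castSucc) (p j.succ)}

/-- The walks of length `k` inside `A` that start at `x`. -/
def walksFrom (A : Finset V) (k : ℕ) (x : V) : Finset (Fin (k + 1) → V) :=
  {p ∈ walksIn G A k | p 0 = x}

variable {A : Finset V} {x : V}

lemma card_walksIn_eq_sum (A : Finset V) (k : ℕ) :
    #(walksIn G A k) = ∑ x, #(walksFrom G A k x) :=
  card_eq_sum_card_fiberwise fun _ _ ↦ mem_univ _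

lemma walksFrom_eq_empty (hx : x ∉ A) (k : ℕ) : walksFrom G A k x = ∅ := by
  ext p
  simp only [walksFrom, walksIn, mem_filter, mem_univ, true_and, notMem_empty, iff_false]
  rintro ⟨⟨hpA, -⟩, rfl⟩
  exact hx (hpA 0)

lemma card_walksFrom_zero (hx : x ∈ A) : #(walksFrom G A 0 x) = 1 := by
  rw [card_eq_one]
  refine ⟨fun _ ↦ x, Finset.ext fun p ↦ ?_⟩
  simp only [walksFrom, walksIn, mem_filter, mem_univ, true_and, mem_singleton,
    IsEmpty.forall_iff, and_true]
  constructor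
  · rintro ⟨-, rfl⟩
    exact funext fun j ↦ congrArg p (Fin.eq_zero j)
  · rintro rfl
    exact ⟨fun _ ↦ hx, rfl⟩

lemma cons_mem_walksIn {k : ℕ} {p : Fin (k + 1) → V} :
    (Fin.cons x p : Fin (k + 2) → V) ∈ walksIn G A (k + 1) ↔
      x ∈ A ∧ G.Adj x (p 0) ∧ p ∈ walksIn G A k := by
  simp only [walksIn, mem_filter, mem_univ, true_and, Fin.forall_fin_succ (n := k + 1),
    Fin.forall_fin_succ (n := k), Fin.cons_zero, Fin.cons_succ, Fin.castSucc_zero,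
    ← Fin.succ_castSucc]
  tauto

lemma card_walksFrom_succ_eq_card_filter (hx : x ∈ A) (k : ℕ) :
    #(walksFrom G A (k + 1) x) = #{p ∈ walksIn G A k | G.Adj x (p 0)} := by
  refine card_nbij' Fin.tail (fun p ↦ Fin.cons x p) ?_ ?_ ?_ ?_
  · intro p hp
    obtain ⟨hpA, rfl⟩ := mem_filter.1 hp
    rw [← Fin.cons_self_tail p, cons_mem_walksIn] at hpA
    exact mem_filter.2 hpA.2.symm
  · intro p hp
    obtain ⟨hp, hxp⟩ := mem_filter.1 hp
    exact mem_filter.2 ⟨(cons_mem_walksIn G).2 ⟨hx, hxp, hp⟩, rfl⟩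
  · intro p hp
    obtain ⟨-, rfl⟩ := mem_filter.1 hp
    exact Fin.cons_self_tail p
  · exact fun _ _ ↦ rfl

lemma card_walksFrom_succ (hx : x ∈ A) (k : ℕ) :
    #(walksFrom G A (k + 1) x) = ∑ y ∈ G.neighborFinset x, #(walksFrom G A k y) := by
  rw [card_walksFrom_succ_eq_card_filter G hx, card_eq_sum_card_fiberwise (f := fun p ↦ p 0)
    (t := G.neighborFinset x) fun p hp ↦ by simpa using (mem_filter.1 hp).2]
  refine sum_congr rfl fun y hy ↦ congrArg card ?_
  ext p
  simp only [walksFrom, mem_filter]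
  have h_adj : G.Adj x y := (G.mem_neighborFinset x y).1 hy
  constructor
  · rintro ⟨⟨hp, -⟩, rfl⟩
    exact ⟨hp, rfl⟩
  · rintro ⟨hp, rfl⟩
    exact ⟨⟨hp, h_adj⟩, rfl⟩

/-- For the simple random walk from `x` on the `d`-regular graph `G`, the expectation of
`min Y K`, where `Y` is the first exit time from `A`: the sum over `k < K` of
`Pr{Y > k} = #(walksFrom G A k x) / d ^ k`. -/
noncomputable def truncatedExitTime (A : Finset V) (d K : ℕ) (x : V) : ℝ :=
  ∑ k ∈ range K, (#(walksFrom G A k x) : ℝ) / (d : ℝ) ^ k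

lemma truncatedExitTime_nonneg (A : Finset V) (d K : ℕ) (x : V) :
    0 ≤ truncatedExitTime G A d K x := by
  unfold truncatedExitTime; positivity

lemma truncatedExitTime_of_notMem (hx : x ∉ A) (d K : ℕ) : truncatedExitTime G A d K x = 0 := by
  simp [truncatedExitTime, walksFrom_eq_empty G hx]

lemma sum_truncatedExitTime (A : Finset V) (d K : ℕ) :
    ∑ x, truncatedExitTime G A d K x = ∑ k ∈ range K, (#(walksIn G A k) : ℝ) / (d : ℝ) ^ k := by
  simp only [truncatedExitTime, card_walksIn_eq_sum, Nat.cast_sum, sum_div]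
  exact sum_comm

variable {G} {d : ℕ}

lemma lapMatrix_mulVec_truncatedExitTime_le (hG : G.IsRegularOfDegree d) (hd : d ≠ 0) (hx : x ∈ A)
    (K : ℕ) : (G.lapMatrix ℝ *ᵥ truncatedExitTime G A d K) x ≤ d := by
  let c : ℕ → ℝ := fun k ↦ d * (#(walksFrom G A k x) / (d : ℝ) ^ k)
  have h_sum : ∑ y ∈ G.neighborFinset x, truncatedExitTime G A d K y =
      ∑ k ∈ range K, c (k + 1) := by
    simp only [truncatedExitTime]
    rw [sum_comm]
    refine sum_congr rfl fun k _ ↦ ?_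
    have hd' : (d : ℝ) ≠ 0 := Nat.cast_ne_zero.2 hd
    simp only [c, ← sum_div, ← Nat.cast_sum, ← card_walksFrom_succ G hx]
    rw [pow_succ', ← mul_div_assoc, mul_div_mul_left _ _ hd']
  calc (G.lapMatrix ℝ *ᵥ truncatedExitTime G A d K) x
      = ∑ k ∈ range K, (c k - c (k + 1)) := by
        rw [G.lapMatrix_mulVec_apply, hG.degree_eq, h_sum, sum_sub_distrib, truncatedExitTime,
          mul_sum]
    _ = c 0 - c K := sum_range_sub' c K
    _ ≤ c 0 := sub_le_self _ (by positivity)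
    _ = d := by simp [c, card_walksFrom_zero G hx]

lemma dirichletForm_truncatedExitTime_le (hG : G.IsRegularOfDegree d) (hd : d ≠ 0) (A : Finset V)
    (K : ℕ) : dirichletForm G (truncatedExitTime G A d K) ≤
      d * ∑ x, truncatedExitTime G A d K x := by
  rw [dirichletForm_eq_dotProduct, dotProduct, mul_sum]
  refine sum_le_sum fun x _ ↦ ?_
  by_cases hx : x ∈ A
  · rw [mul_comm]
    exact mul_le_mul_of_nonneg_right (lapMatrix_mulVec_truncatedExitTime_le hG hd hx K)
      (truncatedExitTime_nonneg G A d K x)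
  · simp [truncatedExitTime_of_notMem G hx]

lemma sum_card_walksIn_div_le_of_faberKrahn (hG : G.IsRegularOfDegree d) (hd : d ≠ 0)
    {c : ℝ} (hc : 0 < c)
    (hFK : ∀ f : V → ℝ, (∀ x, 0 ≤ f x) → (∀ x ∉ A, f x = 0) →
      (∑ x, f x) ^ 2 * c / #A ≤ dirichletForm G f) (K : ℕ) :
    ∑ k ∈ range K, (#(walksIn G A k) : ℝ) / (#A * (d : ℝ) ^ k) ≤ d / c := by
  set u := truncatedExitTime G A d K
  have h_mean : ∑ k ∈ range K, (#(walksIn G A k) : ℝ) / (#A * (d : ℝ) ^ k) =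
      (∑ x, u x) / #A := by
    simp only [u, sum_truncatedExitTime, sum_div, div_div, mul_comm]
  have h_energy : (∑ x, u x) ^ 2 * c / #A ≤ d * ∑ x, u x :=
    (hFK u (truncatedExitTime_nonneg G A d K) fun x hx ↦
      truncatedExitTime_of_notMem G hx d K).trans (dirichletForm_truncatedExitTime_le hG hd A K)
  rw [h_mean]
  rcases (sum_nonneg fun x _ ↦ truncatedExitTime_nonneg G A d K x :
    0 ≤ ∑ x, u x).eq_or_lt with h_zero | h_pos
  · rw [← h_zero, zero_div]
    positivity
  · rw [le_div_iff₀ hc]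
    refine le_of_mul_le_mul_left ?_ h_pos
    calc (∑ x, u x) * ((∑ x, u x) / #A * c) = (∑ x, u x) ^ 2 * c / #A := by ring
      _ ≤ (∑ x, u x) * d := h_energy.trans_eq (mul_comm _ _)

end Graph

section RealInequalities

lemma self_le_logb_two_one_add {x : ℝ} (h₀ : 0 ≤ x) (h₁ : x ≤ 1) : x ≤ Real.logb 2 (1 + x) := by
  rw [Real.le_logb_iff_rpow_le one_lt_two (by positivity)]
  simpa [one_add_one_eq_two] using
    rpow_one_add_le_one_add_mul_self (s := 1) (by norm_num) h₀ h₁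

lemma logb_two_add_div_le_logb_two_add {a b : ℝ} (hb : 0 < b) (hba : b ≤ a) :
    Real.logb 2 a + b / a ≤ Real.logb 2 (a + b) := by
  have ha : 0 < a := hb.trans_le hba
  calc Real.logb 2 a + b / a ≤ Real.logb 2 a + Real.logb 2 (1 + b / a) := by
        gcongr
        exact self_le_logb_two_one_add (by positivity) ((div_le_one ha).2 hba)
    _ = Real.logb 2 (a * (1 + b / a)) := (Real.logb_mul ha.ne' (by positivity)).symm
    _ = Real.logb 2 (a + b) := by congr 1; field_simp

lemma logb_two_add_le {a b : ℝ} (hb : 0 < b) (hba : b ≤ a) :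
    Real.logb 2 (a + b) ≤ 1 + Real.logb 2 a := by
  have ha : 0 < a := hb.trans_le hba
  calc Real.logb 2 (a + b) ≤ Real.logb 2 (2 * a) :=
        Real.logb_le_logb_of_le one_lt_two (by positivity) (by linarith)
    _ = 1 + Real.logb 2 a := by
        rw [Real.logb_mul two_ne_zero ha.ne', Real.logb_self_eq_one one_lt_two]

lemma two_add_logb_two_add_logb_two_le {a b : ℝ} (ha : 0 < a) (hb : 0 < b) :
    2 + Real.logb 2 a + Real.logb 2 b ≤ 2 * Real.logb 2 (a + b) := by
  calc 2 + Real.logb 2 a + Real.logb 2 b = Real.logb 2 (2 ^ 2 * a * b) := by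
        rw [Real.logb_mul (by positivity) hb.ne', Real.logb_mul (by positivity) ha.ne',
          Real.logb_pow, Real.logb_self_eq_one one_lt_two]
        norm_num
    _ ≤ Real.logb 2 ((a + b) ^ 2) :=
        Real.logb_le_logb_of_le one_lt_two (by positivity) (by nlinarith [sq_nonneg (a - b)])
    _ = 2 * Real.logb 2 (a + b) := by simp [Real.logb_pow]

lemma add_sq_div_add_le {a b : ℝ} (ha : 0 < a) (hb : 0 < b) (s t : ℝ) :
    (s + t) ^ 2 / (a + b) ≤ s ^ 2 / a + t ^ 2 / b := by
  have := sq_sum_div_le_sum_sq_div univ ![s, t] (g := ![a, b]) (by simp [Fin.forall_fin_two, *])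
  simpa [Fin.sum_univ_two] using this

lemma mul_add_sq_div_add_le {a b r : ℝ} (ha : 0 < a) (hb : 0 < b) (hr : 0 ≤ r)
    (har : a * r ≤ a - b) (s t : ℝ) :
    r * ((s + t) ^ 2 / (a + b)) ≤ 2 * r * (t ^ 2 / b) + (s - t) ^ 2 / a := by
  have := sub_nonneg.2 har
  rw [← sub_nonneg]
  calc 0 ≤ (2 * (b * (s - t) - a * r * t) ^ 2 + b * (a - b - a * r) * (s - t) ^ 2
          + 2 * a * r * (a - b - a * r) * t ^ 2) / (a * b * (a + b)) := by positivity
    _ = _ := by field_simp; ring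

/-- The right-hand side of the Faber-Krahn inequality in the `m`-dimensional cube, for supports of
size `a` and functions of sum `s`. It is the Dirichlet energy of a constant function when the
support is a subcube, which has `a` points with `m - log₂ a` outgoing edges each. The junk value `0`
at `a = 0` is the right one, since an empty support forces `s = 0`. -/
noncomputable def faberKrahnBound (m a s : ℝ) : ℝ :=
  s ^ 2 * (m - Real.logb 2 a) / a

lemma faberKrahnBound_add_le_of_le {m a b : ℝ} (hb : 0 < b) (hba : b ≤ a)
    (hm : Real.logb 2 a ≤ m) (s t : ℝ) :
    faberKrahnBound (m + 1) (a + b) (s + t) ≤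
      faberKrahnBound m a s + faberKrahnBound m b t + (s - t) ^ 2 / a := by
  have ha : 0 < a := hb.trans_le hba
  set d := m - Real.logb 2 a with hd
  set r := 1 + Real.logb 2 a - Real.logb 2 (a + b) with hr
  have hd₀ : 0 ≤ d := sub_nonneg.2 hm
  have hr₀ : 0 ≤ r := sub_nonneg.2 (logb_two_add_le hb hba)
  have har : a * r ≤ a - b := by
    calc a * r ≤ a * (1 - b / a) := by
          gcongr
          linarith [logb_two_add_div_le_logb_two_add hb hba]
      _ = a - b := by field_simp
  have h_two_r : 2 * r ≤ Real.logb 2 a - Real.logb 2 b := by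
    linarith [two_add_logb_two_add_logb_two_le ha hb]
  calc faberKrahnBound (m + 1) (a + b) (s + t)
      = d * ((s + t) ^ 2 / (a + b)) + r * ((s + t) ^ 2 / (a + b)) := by
        rw [faberKrahnBound, hd, hr]; ring
    _ ≤ d * (s ^ 2 / a + t ^ 2 / b) + (2 * r * (t ^ 2 / b) + (s - t) ^ 2 / a) :=
        add_le_add (mul_le_mul_of_nonneg_left (add_sq_div_add_le ha hb s t) hd₀)
          (mul_add_sq_div_add_le ha hb hr₀ har s t)
    _ ≤ d * (s ^ 2 / a + t ^ 2 / b) +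
          ((Real.logb 2 a - Real.logb 2 b) * (t ^ 2 / b) + (s - t) ^ 2 / a) := by gcongr
    _ = faberKrahnBound m a s + faberKrahnBound m b t + (s - t) ^ 2 / a := by
        rw [faberKrahnBound, faberKrahnBound, hd]; ring

lemma faberKrahnBound_add_le {m a b s t : ℝ} (ha : 0 ≤ a) (hb : 0 ≤ b)
    (has : a = 0 → s = 0) (hbt : b = 0 → t = 0)
    (hma : Real.logb 2 a ≤ m) (hmb : Real.logb 2 b ≤ m) :
    faberKrahnBound (m + 1) (a + b) (s + t) ≤
      faberKrahnBound m a s + faberKrahnBound m b t + (s - t) ^ 2 / max a b := by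
  wlog hba : b ≤ a generalizing a b s t
  · have := this hb ha hbt has hmb hma (le_of_not_ge hba)
    rwa [add_comm b, add_comm t, add_comm (faberKrahnBound m b t), max_comm, sub_sq_comm] at this
  rw [max_eq_left hba]
  rcases hb.eq_or_lt with rfl | hb
  · rw [hbt rfl]
    simp only [faberKrahnBound, add_zero, sub_zero]
    exact le_of_eq (by ring)
  · exact faberKrahnBound_add_le_of_le hb hba hma s t

end RealInequalities

section Supports

lemma sq_sum_sub_sum_le {ι : Type*} [Fintype ι] {A B : Finset ι} {f g : ι → ℝ}
    (hf : ∀ x, 0 ≤ f x) (hg : ∀ x, 0 ≤ g x) (hfA : ∀ x ∉ A, f x = 0) (hgB : ∀ x ∉ B, g x = 0) :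
    (∑ x, f x - ∑ x, g x) ^ 2 ≤ max (#A : ℝ) #B * ∑ x, (f x - g x) ^ 2 := by
  wlog hgf : ∑ x, g x ≤ ∑ x, f x generalizing A B f g
  · have := this hg hf hgB hfA (le_of_not_ge hgf)
    simpa only [max_comm, sub_sq_comm] using this
  have h_diff : ∑ x, f x - ∑ x, g x ≤ ∑ x ∈ A, (f x - g x) := by
    rw [sum_sub_distrib, sum_subset (subset_univ A) fun x _ hx ↦ hfA x hx]
    gcongr
    · exact fun x _ _ ↦ hg x
    · exact subset_univ A
  calc (∑ x, f x - ∑ x, g x) ^ 2 ≤ (∑ x ∈ A, (f x - g x)) ^ 2 :=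
        pow_le_pow_left₀ (sub_nonneg.2 hgf) h_diff 2
    _ ≤ #A * ∑ x ∈ A, (f x - g x) ^ 2 := sq_sum_le_card_mul_sum_sq
    _ ≤ max (#A : ℝ) #B * ∑ x, (f x - g x) ^ 2 := by
        gcongr
        · exact le_max_left _ _
        · exact subset_univ A

lemma faberKrahnBound_card_add_card_le {ι : Type*} [Fintype ι] {A B : Finset ι} {f g : ι → ℝ}
    {m : ℝ} (hf : ∀ x, 0 ≤ f x) (hg : ∀ x, 0 ≤ g x) (hfA : ∀ x ∉ A, f x = 0)
    (hgB : ∀ x ∉ B, g x = 0) (hmA : Real.logb 2 #A ≤ m) (hmB : Real.logb 2 #B ≤ m) :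
    faberKrahnBound (m + 1) (#A + #B) (∑ x, f x + ∑ x, g x) ≤
      faberKrahnBound m #A (∑ x, f x) + faberKrahnBound m #B (∑ x, g x) +
        ∑ x, (f x - g x) ^ 2 := by
  have h_empty : ∀ {C : Finset ι} {h : ι → ℝ}, (∀ x ∉ C, h x = 0) → (#C : ℝ) = 0 →
      ∑ x, h x = 0 := fun hC hC₀ ↦ sum_eq_zero fun x _ ↦ hC x <| by
    simp [card_eq_zero.1 (Nat.cast_eq_zero.1 hC₀)]
  refine (faberKrahnBound_add_le (Nat.cast_nonneg _) (Nat.cast_nonneg _)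
    (h_empty hfA) (h_empty hgB) hmA hmB).trans ?_
  gcongr
  exact div_le_of_le_mul₀ (by positivity) (by positivity)
    ((sq_sum_sub_sum_le hf hg hfA hgB).trans_eq (mul_comm _ _))

end Supports

section Hypercube

/-- The graph on `{0,1}^n` joining the points that differ in exactly one coordinate. -/
def hypercube (n : ℕ) : SimpleGraph (Fin n → Bool) where
  Adj x y := hammingDist x y = 1
  symm := ⟨fun x y h ↦ by rwa [hammingDist_comm]⟩
  loopless := ⟨fun x h ↦ by simp at h⟩

instance (n : ℕ) : DecidableRel (hypercube n).Adj :=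
  fun x y ↦ inferInstanceAs (Decidable (hammingDist x y = 1))

lemma walkCount_eq_card_walksIn (n : ℕ) (A : Finset (Fin n → Bool)) (k : ℕ) :
    walkCount n A k = #(walksIn (hypercube n) A k) :=
  rfl

lemma sum_fin_succ_fun {α M : Type*} [Fintype α] [AddCommMonoid M] {n : ℕ}
    (g : (Fin (n + 1) → α) → M) : ∑ x, g x = ∑ a, ∑ x : Fin n → α, g (Fin.cons a x) := by
  rw [← (Fin.consEquiv fun _ : Fin (n + 1) ↦ α).sum_comp g, Fintype.sum_prod_type]
  rfl

variable {n : ℕ}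

lemma hypercube_adj_cons (a b : Bool) (x y : Fin n → Bool) :
    (hypercube (n + 1)).Adj (Fin.cons a x) (Fin.cons b y) ↔
      if a = b then (hypercube n).Adj x y else x = y := by
  have h_dist : hammingDist (Fin.cons a x : Fin (n + 1) → Bool) (Fin.cons b y) =
      (if a = b then 0 else 1) + hammingDist x y := by
    simp [hammingDist, card_filter, Fin.sum_univ_succ]
  simp only [hypercube, h_dist]
  split_ifs <;> simp

lemma hypercube_isRegularOfDegree (n : ℕ) : (hypercube n).IsRegularOfDegree n := by
  induction n with
  | zero =>
    intro x
    rw [SimpleGraph.degree, card_eq_zero, eq_empty_iff_forall_notMem]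
    intro y hy
    exact ((SimpleGraph.mem_neighborFinset _ _ _).1 hy).ne (Subsingleton.elim x y)
  | succ n ih =>
    intro x
    have h_degree {m : ℕ} (y : Fin m → Bool) :
        (hypercube m).degree y = #{z | (hypercube m).Adj y z} := by
      rw [← SimpleGraph.card_neighborFinset_eq_degree, SimpleGraph.neighborFinset_eq_filter]
    induction x using Fin.consCases with | cons a x => ?_
    rw [h_degree, card_filter, sum_fin_succ_fun]
    cases a <;> simp [hypercube_adj_cons, ← h_degree, ih.degree_eq, filter_eq, add_comm]

lemma dirichletForm_hypercube_succ (f : (Fin (n + 1) → Bool) → ℝ) :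
    dirichletForm (hypercube (n + 1)) f =
      dirichletForm (hypercube n) (fun x ↦ f (Fin.cons true x)) +
        dirichletForm (hypercube n) (fun x ↦ f (Fin.cons false x)) +
          ∑ x : Fin n → Bool, (f (Fin.cons true x) - f (Fin.cons false x)) ^ 2 := by
  simp only [dirichletForm, sum_fin_succ_fun, hypercube_adj_cons, Fintype.sum_bool, if_true,
    reduceCtorEq, if_false, sum_add_distrib, sum_ite_eq, mem_univ]
  simp only [sub_sq_comm (f (Fin.cons false _)) (f (Fin.cons true _))]
  ring

/-- The trace of `A` on the facet of the cube where the first coordinate is `a`. -/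
def facet (A : Finset (Fin (n + 1) → Bool)) (a : Bool) : Finset (Fin n → Bool) :=
  {x | Fin.cons a x ∈ A}

lemma mem_facet {A : Finset (Fin (n + 1) → Bool)} {a : Bool} {x : Fin n → Bool} :
    x ∈ facet A a ↔ Fin.cons a x ∈ A := by
  simp [facet]

lemma card_eq_card_facet_add_card_facet (A : Finset (Fin (n + 1) → Bool)) :
    #A = #(facet A true) + #(facet A false) := by
  have h_card : #A = ∑ x, if x ∈ A then 1 else 0 := by simp
  rw [h_card, sum_fin_succ_fun]
  simp [facet]

lemma logb_two_card_le (A : Finset (Fin n → Bool)) : Real.logb 2 #A ≤ n := by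
  rcases A.eq_empty_or_nonempty with rfl | hA
  · simp
  · rw [Real.logb_le_iff_le_rpow one_lt_two (Nat.cast_pos.2 hA.card_pos), Real.rpow_natCast]
    exact_mod_cast (card_le_univ A).trans_eq (by simp)

theorem faberKrahnBound_le_dirichletForm {A : Finset (Fin n → Bool)} {f : (Fin n → Bool) → ℝ}
    (hf : ∀ x, 0 ≤ f x) (hfA : ∀ x ∉ A, f x = 0) :
    faberKrahnBound n #A (∑ x, f x) ≤ dirichletForm (hypercube n) f := by
  induction n with
  | zero =>
    refine le_trans ?_ (dirichletForm_nonneg _ f)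
    have h_log : 0 ≤ Real.logb 2 #A :=
      div_nonneg (Real.log_natCast_nonneg _) (Real.log_nonneg one_le_two)
    refine div_nonpos_of_nonpos_of_nonneg (mul_nonpos_of_nonneg_of_nonpos (sq_nonneg _) ?_)
      (Nat.cast_nonneg _)
    simpa using h_log
  | succ n ih =>
    have hf_facet (a : Bool) (x : Fin n → Bool) : 0 ≤ f (Fin.cons a x) := hf _
    have hfA_facet (a : Bool) (x : Fin n → Bool) (hx : x ∉ facet A a) : f (Fin.cons a x) = 0 :=
      hfA _ (mem_facet.not.1 hx)
    have h_ih (a : Bool) := ih (hf_facet a) (hfA_facet a)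
    rw [dirichletForm_hypercube_succ, sum_fin_succ_fun, Fintype.sum_bool,
      card_eq_card_facet_add_card_facet]
    push_cast
    refine (faberKrahnBound_card_add_card_le (hf_facet true) (hf_facet false) (hfA_facet true)
      (hfA_facet false) (logb_two_card_le _) (logb_two_card_le _)).trans ?_
    gcongr
    · exact h_ih true
    · exact h_ih false

end Hypercube

/-- Mean first exit time from `A` of the simple random walk started uniformly in `A`:
`E Y = ∑_{k≥0} Pr{Y > k}` where `Pr{Y > k} = walkCount k / (|A|·n^k)`.
Subcubes maximize it: `E Y ≤ n / log₂(2^n/|A|)`. -/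
theorem mean_exit_time_le (n : ℕ) (A : Finset (Fin n → Bool))
    (hA : A.Nonempty) (hA' : A.card < 2 ^ n) :
    ∑' k : ℕ, (walkCount n A k : ℝ) / ((A.card : ℝ) * (n : ℝ) ^ k) ≤
      (n : ℝ) / Real.logb 2 ((2 : ℝ) ^ n / (A.card : ℝ)) := by
  have hA₀ : (0 : ℝ) < #A := Nat.cast_pos.2 hA.card_pos
  have hn : n ≠ 0 := by
    rintro rfl
    have := hA.card_pos
    omega
  have h_log_pos : 0 < Real.logb 2 (2 ^ n / #A) :=
    Real.logb_pos one_lt_two ((one_lt_div hA₀).2 (mod_cast hA'))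
  have h_log : Real.logb 2 (2 ^ n / #A) = n - Real.logb 2 #A := by
    rw [Real.logb_div (by positivity) hA₀.ne', Real.logb_pow, Real.logb_self_eq_one one_lt_two,
      mul_one]
  refine Real.tsum_le_of_sum_range_le (fun k ↦ by positivity) fun K ↦ ?_
  simp only [walkCount_eq_card_walksIn]
  refine sum_card_walksIn_div_le_of_faberKrahn (hypercube_isRegularOfDegree n) hn h_log_pos
    (fun f hf hfA ↦ ?_) K
  rw [h_log]
  exact faberKrahnBound_le_dirichletForm hf hfA
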